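/- arXiv:1808.04917 — 2 statements merged into one kernel-verified Lean document; each statement's English description precedes it below -/
import Mathlib

section
/- Multiplication by ε₀ (respectively by ε₁) is a ℤ-linear automorphism of the ideal A₁ and hence induces a ℤ-linear automorphism of ∧²_ℤ A₁ sending a ∧ b to (ε₀·a) ∧ (ε₀·b) (respectively (ε₁·a) ∧ (ε₁·b)). Both (ε₀·Δ) − Δ and (ε₁·Δ) − Δ lie in the submodule S ∧ A₁ of ∧²_ℤ A₁; equivalently, the image of Δ in ∧²_ℤ(A₁/S) is invariant under the actions induced by multiplication by ε₀ and by ε₁. -/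
noncomputable section

/-- The group `μₙ × μₙ`, realized as `Multiplicative (ZMod n) × Multiplicative (ZMod n)`. -/
abbrev MuMu (n : ℕ) : Type := Multiplicative (ZMod n) × Multiplicative (ZMod n)

/-- The group ring `Λ = ℤ[μₙ × μₙ]`. -/
abbrev Lam (n : ℕ) : Type := MonoidAlgebra ℤ (MuMu n)

/-- The first standard generator of `μₙ × μₙ`. -/
def g0 (n : ℕ) : MuMu n := (Multiplicative.ofAdd 1, 1)

/-- The second standard generator of `μₙ × μₙ`. -/
def g1 (n : ℕ) : MuMu n := (1, Multiplicative.ofAdd 1)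

/-- `ε₀`, the first standard generator viewed in `Λ`. -/
def eps0 (n : ℕ) : Lam n := MonoidAlgebra.of ℤ (MuMu n) (g0 n)

/-- `ε₁`, the second standard generator viewed in `Λ`. -/
def eps1 (n : ℕ) : Lam n := MonoidAlgebra.of ℤ (MuMu n) (g1 n)

/-- The ideal `A₁ = ⟨(ε₀ − 1)(ε₁ − 1)⟩ ⊆ Λ`. -/
def A1 (n : ℕ) : Ideal (Lam n) := Ideal.span {(eps0 n - 1) * (eps1 n - 1)}

/-- `N = ∑_{k=0}^{n-1} ε₀^k ε₁^k ∈ Λ`. -/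
def Nel (n : ℕ) : Lam n := ∑ k ∈ Finset.range n, eps0 n ^ k * eps1 n ^ k

/-- `γ_i = ε₀^{-i} (1 - ε₁) N ∈ Λ`, for `i : ℤ` (the power `ε₀^{-i}` being the power of
the corresponding group element). -/
def gam (n : ℕ) (i : ℤ) : Lam n :=
  MonoidAlgebra.of ℤ (MuMu n) (g0 n ^ (-i)) * ((1 - eps1 n) * Nel n)

/-- The `ℤ`-submodule `S ⊆ Λ` spanned by `{γ_i : 0 ≤ i ≤ n−1}`. -/
def Sgam (n : ℕ) : Submodule ℤ (Lam n) :=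
  Submodule.span ℤ {x : Lam n | ∃ i : ℕ, i < n ∧ x = gam n i}

/-- `A₁` regarded as a `ℤ`-submodule of `Λ`. -/
abbrev A1Z (n : ℕ) : Submodule ℤ (Lam n) := (A1 n).restrictScalars ℤ

/-- `E_{i,j} = (1 − ε₀^i)(1 − ε₁^j) ∈ Λ`. -/
def Ee (n : ℕ) (i j : ℕ) : Lam n := (1 - eps0 n ^ i) * (1 - eps1 n ^ j)

lemma Ee_mem (n i j : ℕ) : Ee n i j ∈ A1 n := by
  rw [A1, Ideal.mem_span_singleton]
  have h : (eps0 n - 1) * (eps1 n - 1) = (1 - eps0 n) * (1 - eps1 n) := by ring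
  rw [h, Ee]
  exact mul_dvd_mul (one_sub_dvd_one_sub_pow _ i) (one_sub_dvd_one_sub_pow _ j)

/-- `E_{i,j}` as an element of the `ℤ`-module `A₁`. -/
def ESub (n i j : ℕ) : A1Z n := ⟨Ee n i j, Ee_mem n i j⟩

/-- The second exterior power `⋀²_ℤ M` of a `ℤ`-module `M`, as a submodule of the
exterior algebra. -/
abbrev Wedge2 (M : Type*) [AddCommGroup M] [Module ℤ M] : Submodule ℤ (ExteriorAlgebra ℤ M) :=
  ⋀[ℤ]^2 M

/-- The wedge `a ∧ b` of two elements of a `ℤ`-module `M`, as an element of `⋀²_ℤ M`. -/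
def wedge {M : Type*} [AddCommGroup M] [Module ℤ M] (a b : M) : Wedge2 M :=
  ⟨ExteriorAlgebra.ιMulti ℤ 2 ![a, b], ExteriorAlgebra.ιMulti_range ℤ 2 ⟨![a, b], rfl⟩⟩

/-- The coefficient `ε(i₁,j₁,i₂,j₂) ∈ {1, −1, 0}`:
`1` if `j₂−j₁ ≡ i₂−i₁ ≢ 0 (mod n−1)`, `−1` if `j₂−j₁+1 ≡ i₂−i₁ ≢ 0 (mod n−1)`,
and `0` otherwise. -/
def epsCoef (n : ℕ) (i1 j1 i2 j2 : ℤ) : ℤ :=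
  if Int.ModEq ((n : ℤ) - 1) (j2 - j1) (i2 - i1) ∧ ¬ Int.ModEq ((n : ℤ) - 1) (i2 - i1) 0
    then 1
  else if Int.ModEq ((n : ℤ) - 1) (j2 - j1 + 1) (i2 - i1) ∧ ¬ Int.ModEq ((n : ℤ) - 1) (i2 - i1) 0
    then -1
  else 0

/-- The index set `I`, encoded as pairs `((i₁,j₁),(i₂,j₂))` of pairs of natural numbers
with `1 ≤ i₁ ≤ i₂ ≤ n−1`, `1 ≤ j₁, j₂ ≤ n−1` and `(i₁,j₁) ≠ (i₂,j₂)`. -/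
def IFinset (n : ℕ) : Finset ((ℕ × ℕ) × (ℕ × ℕ)) :=
  ((Finset.Icc 1 (n - 1) ×ˢ Finset.Icc 1 (n - 1)) ×ˢ
    (Finset.Icc 1 (n - 1) ×ˢ Finset.Icc 1 (n - 1))).filter
    fun q => q.1.1 ≤ q.2.1 ∧ q.1 ≠ q.2

/-- `Δ = ∑_{(i₁,j₁,i₂,j₂) ∈ I} ε(i₁,j₁,i₂,j₂) · E_{i₁,j₁} ∧ E_{i₂,j₂} ∈ ⋀²_ℤ A₁`. -/
def Delta (n : ℕ) : Wedge2 ↥(A1Z n) :=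
  ∑ q ∈ IFinset n,
    epsCoef n (q.1.1 : ℤ) (q.1.2 : ℤ) (q.2.1 : ℤ) (q.2.2 : ℤ) •
      wedge (ESub n q.1.1 q.1.2) (ESub n q.2.1 q.2.2)

/-- The `ℤ`-submodule `S ∧ A₁` of `⋀²_ℤ A₁`, generated by the wedges `s ∧ a` with
`s ∈ S` and `a ∈ A₁`. -/
def SwedgeA1 (n : ℕ) : Submodule ℤ ↥(Wedge2 ↥(A1Z n)) :=
  Submodule.span ℤ {x : Wedge2 ↥(A1Z n) |
    ∃ s a : ↥(A1Z n), (s : Lam n) ∈ Sgam n ∧ x = wedge s a}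

section abstr
variable {V W : Type*} [AddCommGroup V] [AddCommGroup W]

lemma sum_range_zmod {W : Type*} [AddCommGroup W] (m : ℕ) [NeZero m] (f : ZMod m → W) :
    ∑ b ∈ Finset.range m, f (b : ZMod m) = ∑ r : ZMod m, f r := by
  refine Finset.sum_nbij' (fun b : ℕ => (b : ZMod m)) ZMod.val ?_ ?_ ?_ ?_ ?_
  · intros; simp
  · intro a _; simpa using ZMod.val_lt a
  · intro a ha; exact ZMod.val_cast_of_lt (by simpa using ha)
  · intro a _; simp
  · intros; rfl

/-- The cyclic pairing. -/
def UU {m : ℕ} [NeZero m] (w : V →ₗ[ℤ] V →ₗ[ℤ] W) (r : ZMod m) (x y : ZMod m → V) : W :=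
  ∑ j : ZMod m, w (x j) (y (j + r))

/-- The difference of cyclic pairings. -/
def TT {m : ℕ} [NeZero m] (w : V →ₗ[ℤ] V →ₗ[ℤ] W) (r : ZMod m) (x y : ZMod m → V) : W :=
  UU w r x y - UU w (r - 1) x y

variable {m : ℕ} [NeZero m] (w : V →ₗ[ℤ] V →ₗ[ℤ] W)

lemma UU_sub_sub (r : ZMod m) (x x2 y y2 : ZMod m → V) :
    UU w r (x - x2) (y - y2) = UU w r x y - UU w r x2 y - UU w r x y2 + UU w r x2 y2 := by
  simp only [UU, Pi.sub_apply, map_sub, LinearMap.sub_apply, Finset.sum_sub_distrib]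
  abel

lemma TT_sub_sub (r : ZMod m) (x x2 y y2 : ZMod m → V) :
    TT w r (x - x2) (y - y2) = TT w r x y - TT w r x2 y - TT w r x y2 + TT w r x2 y2 := by
  simp only [TT, UU_sub_sub]; abel

lemma w_swap (hw : ∀ x, w x x = 0) (x y : V) : w x y = - w y x := by
  have h := hw (x + y)
  simp only [map_add, LinearMap.add_apply, hw] at h
  rw [eq_neg_iff_add_eq_zero]
  simpa [add_comm] using h

lemma UU_swap (hw : ∀ x, w x x = 0) (r : ZMod m) (x y : ZMod m → V) :
    UU w r x y = - UU w (-r) y x := by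
  unfold UU
  rw [← Finset.sum_neg_distrib]
  refine Fintype.sum_equiv (Equiv.addRight r) _ _ ?_
  intro j
  rw [w_swap w hw]
  simp

lemma UU_sum (hw : ∀ x, w x x = 0) (x : ZMod m → V) :
    ∑ r : ZMod m, UU w r x x = 0 := by
  unfold UU
  rw [Finset.sum_comm]
  have : ∀ j : ZMod m, ∑ r : ZMod m, w (x j) (x (j + r)) = w (x j) (∑ k, x k) := by
    intro j
    rw [map_sum]
    exact Fintype.sum_equiv (Equiv.addLeft j) _ _ (fun r => by simp)
  simp only [this]
  rw [← LinearMap.sum_apply, ← map_sum, hw]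

lemma TT_tele (x y : ZMod m → V) (k : ℕ) :
    ∑ d ∈ Finset.range k, TT w ((d + 1 : ℕ) : ZMod m) x y = UU w k x y - UU w 0 x y := by
  induction k with
  | zero => simp
  | succ k ih =>
    rw [Finset.sum_range_succ, ih, TT]
    simp

/-- The abstract form of `Δ`. -/
def DD (w : V →ₗ[ℤ] V →ₗ[ℤ] W) (e : ℕ → ZMod m → V) : W :=
  ∑ b ∈ Finset.range m, ∑ a ∈ Finset.range b, TT w ((b - a : ℕ) : ZMod m) (e a) (e b)

lemma tele_flip (x y : ZMod m → V) (b : ℕ) :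
    ∑ a ∈ Finset.range b, TT w ((b - a : ℕ) : ZMod m) x y = UU w b x y - UU w 0 x y := by
  rw [← TT_tele, ← Finset.sum_range_reflect]
  refine Finset.sum_congr rfl fun a ha => ?_
  have : a < b := by simpa using ha
  congr 2
  omega

lemma swap_sum (f : ℕ → ℕ → W) (m : ℕ) :
    ∑ b ∈ Finset.range m, ∑ a ∈ Finset.range b, f a (b - a)
      = ∑ a ∈ Finset.range m, ∑ d ∈ Finset.range (m - 1 - a), f a (d + 1) := by
  induction m with
  | zero => simp
  | succ k ih =>
    rw [Finset.sum_range_succ, ih, Finset.sum_range_succ]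
    simp only [Nat.add_sub_cancel, Nat.sub_self, Finset.range_zero, Finset.sum_empty, add_zero]
    rw [← Finset.sum_add_distrib]
    refine Finset.sum_congr rfl fun a ha => ?_
    have : a < k := by simpa using ha
    obtain ⟨c, rfl⟩ : ∃ c, k = a + 1 + c := ⟨k - (a + 1), by omega⟩
    rw [show a + 1 + c - 1 - a = c by omega, show a + 1 + c - a = c + 1 by omega,
      Finset.sum_range_succ]

lemma DD_eps0 (hw : ∀ x, w x x = 0) (e : ℕ → ZMod m → V) (hm : e m = 0) :
    DD w (fun a => e (a + 1) - e 0) = DD w e := by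
  have h0 : ∀ r x, TT w r x (e m) = 0 := by
    intro r x; simp [TT, UU, hm]
  have h1 : ∑ b ∈ Finset.range m, ∑ a ∈ Finset.range b,
      TT w ((b - a : ℕ) : ZMod m) (e (a + 1)) (e (b + 1))
      = DD w e - ∑ b ∈ Finset.range m, TT w ((b + 1 : ℕ) : ZMod m) (e 0) (e (b + 1)) := by
    have h := Finset.sum_range_succ (fun b => ∑ a ∈ Finset.range b,
      TT w ((b - a : ℕ) : ZMod m) (e a) (e b)) m
    rw [Finset.sum_range_succ'] at h
    simp only [h0, Finset.sum_const_zero, add_zero, Finset.range_zero, Finset.sum_empty] at h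
    rw [DD, ← h, ← Finset.sum_sub_distrib]
    refine Finset.sum_congr rfl fun b _ => ?_
    rw [Finset.sum_range_succ']
    simp
  have h3 : ∑ b ∈ Finset.range m, ∑ a ∈ Finset.range b,
      TT w ((b - a : ℕ) : ZMod m) (e (a + 1)) (e 0)
      = ∑ a ∈ Finset.range m, (UU w 0 (e 0) (e (a + 1)) -
          UU w ((a + 1 : ℕ) : ZMod m) (e 0) (e (a + 1))) := by
    rw [swap_sum (fun a d => TT w (d : ZMod m) (e (a + 1)) (e 0)) m]
    refine Finset.sum_congr rfl fun a ha => ?_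
    have ha : a < m := by simpa using ha
    rw [TT_tele, UU_swap w hw, UU_swap w hw 0]
    have : (-((m - 1 - a : ℕ) : ZMod m)) = ((a + 1 : ℕ) : ZMod m) := by
      rw [neg_eq_iff_add_eq_zero, ← Nat.cast_add, show m - 1 - a + (a + 1) = m by omega]
      simp
    rw [this, neg_zero]
    abel
  have h4 : ∑ b ∈ Finset.range m, (UU w (b : ZMod m) (e 0) (e 0) - UU w 0 (e 0) (e 0)) = 0 := by
    rw [sum_range_zmod m (fun b => UU w b (e 0) (e 0) - UU w 0 (e 0) (e 0)),
      Finset.sum_sub_distrib, UU_sum w hw]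
    simp [UU, hw]
  conv_lhs => rw [DD]
  simp only [TT_sub_sub, Finset.sum_add_distrib, Finset.sum_sub_distrib]
  simp only [h1, h3, tele_flip, h4]
  have : ∀ b : ℕ, TT w ((b + 1 : ℕ) : ZMod m) (e 0) (e (b + 1)) =
    UU w ((b + 1 : ℕ) : ZMod m) (e 0) (e (b + 1)) - UU w (b : ZMod m) (e 0) (e (b + 1)) := by
    intro b; simp [TT]
  simp only [this, Finset.sum_sub_distrib]
  abel

lemma TT_eps1 (x y : ZMod m → V) (r : ZMod m) :
    TT w r (fun j => x (j + 1) - (if j + 1 = 0 then 2 else 1 : ℤ) • x 0)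
      (fun j => y (j + 1) - (if j + 1 = 0 then 2 else 1 : ℤ) • y 0)
    = TT w r x y - w (x 0) (y r - y (r - 1)) - w (x (- r) - x (1 - r)) (y 0)
      + ((if r = 0 then 1 else 0 : ℤ) - (if r = 1 then 1 else 0 : ℤ)) • w (x 0) (y 0) := by
  have key : ∀ r, UU w r (fun j => x (j + 1) - (if j + 1 = 0 then 2 else 1 : ℤ) • x 0)
      (fun j => y (j + 1) - (if j + 1 = 0 then 2 else 1 : ℤ) • y 0)
      = UU w r x y - w (x 0) (∑ k, y k) - w (x 0) (y r) - w (∑ k, x k) (y 0) - w (x (-r)) (y 0)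
        + (m + 2 : ℤ) • w (x 0) (y 0) + (if r = 0 then 1 else 0 : ℤ) • w (x 0) (y 0) := by
    intro r
    unfold UU
    rw [← Fintype.sum_equiv (Equiv.subRight (1 : ZMod m)) (fun j : ZMod m =>
      w (x j - (if j = 0 then 2 else 1 : ℤ) • x 0)
        (y (j + r) - (if j + r = 0 then 2 else 1 : ℤ) • y 0)) _ (fun j => by
          simp [show j - 1 + r + 1 = j + r by ring])]
    have s3 : ∑ j : ZMod m, y (j + r) = ∑ k, y k :=
      Fintype.sum_equiv (Equiv.addRight r) _ _ (fun j => by simp)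
    have s4 : ∀ j : ZMod m, w (x j - (if j = 0 then 2 else 1 : ℤ) • x 0)
        (y (j + r) - (if j + r = 0 then 2 else 1 : ℤ) • y 0)
        = w (x j) (y (j + r)) - w (x 0) (y (j + r)) - (if j = 0 then w (x 0) (y (j + r)) else 0)
          - w (x j) (y 0) - (if j = -r then w (x j) (y 0) else 0) + w (x 0) (y 0)
          + (if j = 0 then w (x 0) (y 0) else 0) + (if j = -r then w (x 0) (y 0) else 0)
          + (if j = 0 then (if r = 0 then w (x 0) (y 0) else 0) else 0) := by
      intro j
      by_cases h1 : j = 0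
      · subst h1
        by_cases h2 : r = 0
        · subst h2
          simp [two_smul]
        · have h3 : ¬ (0 = -r) := by
            intro h; exact h2 (neg_eq_zero.mp h.symm)
          simp [two_smul, h2]
          abel
      · by_cases h2 : j = -r
        · subst h2
          have h3 : ¬ r = 0 := by simpa using h1
          simp [two_smul, h3]
          abel
        · have h3 : ¬ (j + r = 0) := by
            intro h; exact h2 (eq_neg_iff_add_eq_zero.mpr h)
          simp [h1, h2, h3]
          abel
    simp only [s4, Finset.sum_sub_distrib, Finset.sum_add_distrib, Finset.sum_ite_eq',
      Finset.mem_univ, if_true, ← map_sum, s3, zero_add, Finset.sum_const, Finset.card_univ,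
      ZMod.card]
    have s5 : ∑ j : ZMod m, w (x j) (y 0) = w (∑ k, x k) (y 0) := by
      rw [map_sum, LinearMap.sum_apply]
    rw [s5, add_smul, natCast_zsmul, two_smul, ite_smul, one_smul, zero_smul, map_nsmul]
    generalize ∑ j : ZMod m, w (x j) (y (j + r)) = Z
    abel
  rw [TT, key, key]
  simp only [TT, map_sub, LinearMap.sub_apply, sub_smul, sub_eq_zero, neg_sub]
  abel

lemma sum_sym (f : ℕ → ℕ → W) (h : ∀ a, f a a = 0) (m : ℕ) :
    ∑ b ∈ Finset.range m, ∑ a ∈ Finset.range b, (f a b + f b a)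
      = ∑ b ∈ Finset.range m, ∑ a ∈ Finset.range m, f a b := by
  induction m with
  | zero => simp
  | succ k ih =>
    rw [Finset.sum_range_succ, ih, Finset.sum_range_succ _ k]
    simp only [Finset.sum_range_succ _ k, Finset.sum_add_distrib, h]
    abel
end abstr

lemma coe_wedge {M : Type*} [AddCommGroup M] (a b : M) :
    (wedge a b : ExteriorAlgebra ℤ M) = ExteriorAlgebra.ι ℤ a * ExteriorAlgebra.ι ℤ b := by
  simp [wedge, ExteriorAlgebra.ιMulti_apply]

/-- The wedge as a bilinear map. -/
def wB (M : Type*) [AddCommGroup M] : M →ₗ[ℤ] M →ₗ[ℤ] Wedge2 M :=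
  LinearMap.mk₂ ℤ wedge
    (fun a b c => Subtype.ext (by simp [coe_wedge, add_mul]))
    (fun r a b => Subtype.ext (by
      simp only [coe_wedge, LinearMap.map_smul, smul_mul_assoc, mul_smul_comm,
        Submodule.coe_smul]))
    (fun a b c => Subtype.ext (by simp [coe_wedge, mul_add]))
    (fun r a b => Subtype.ext (by
      simp only [coe_wedge, LinearMap.map_smul, smul_mul_assoc, mul_smul_comm,
        Submodule.coe_smul]))

lemma wB_apply {M : Type*} [AddCommGroup M] (a b : M) : wB M a b = wedge a b := rfl

lemma wB_self {M : Type*} [AddCommGroup M] (a : M) : wB M a a = 0 :=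
  Subtype.ext (by simp [wB_apply, coe_wedge])

/-- The induced automorphism of the second exterior power. -/
def wMap {M : Type*} [AddCommGroup M] (f : M ≃ₗ[ℤ] M) : Wedge2 M ≃ₗ[ℤ] Wedge2 M :=
  LinearEquiv.ofLinearMap (exteriorPower.map 2 f.toLinearMap) (exteriorPower.map 2 f.symm.toLinearMap)
    (by rw [← exteriorPower.map_comp]; simp) (by rw [← exteriorPower.map_comp]; simp)

lemma wMap_wedge {M : Type*} [AddCommGroup M] (f : M ≃ₗ[ℤ] M) (a b : M) :
    wMap f (wedge a b) = wedge (f a) (f b) := by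
  have h := exteriorPower.map_apply_ιMulti (R := ℤ) (n := 2) f.toLinearMap ![a, b]
  have h2 : (⇑f.toLinearMap ∘ ![a, b]) = ![f a, f b] := by
    funext i; fin_cases i <;> rfl
  rw [h2] at h
  exact h

/-- Multiplication by a unit on `A₁`. -/
def mulEquiv (n : ℕ) (u v : Lam n) (h : u * v = 1) : A1Z n ≃ₗ[ℤ] A1Z n where
  toFun x := ⟨u * x, (A1 n).mul_mem_left u x.2⟩
  invFun x := ⟨v * x, (A1 n).mul_mem_left v x.2⟩
  map_add' x y := Subtype.ext (by simp [mul_add])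
  map_smul' r x := Subtype.ext (by simp [mul_left_comm])
  left_inv x := Subtype.ext (by
    change v * (u * (x : Lam n)) = x
    rw [← mul_assoc, mul_comm v u, h, one_mul])
  right_inv x := Subtype.ext (by
    change u * (v * (x : Lam n)) = x
    rw [← mul_assoc, h, one_mul])

lemma eps0_pow (n : ℕ) : eps0 n ^ n = 1 := by
  rw [eps0, ← map_pow]
  have : g0 n ^ n = 1 := by
    ext <;> simp [g0, ← ofAdd_nsmul]
  rw [this, map_one]

lemma eps1_pow (n : ℕ) : eps1 n ^ n = 1 := by
  rw [eps1, ← map_pow]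
  have : g1 n ^ n = 1 := by
    ext <;> simp [g1, ← ofAdd_nsmul]
  rw [this, map_one]

lemma map_DD {V W : Type*} [AddCommGroup V] [AddCommGroup W] {m : ℕ} [NeZero m]
    (w : V →ₗ[ℤ] V →ₗ[ℤ] W) (F : W ≃ₗ[ℤ] W) (f : V → V)
    (h : ∀ x y, F (w x y) = w (f x) (f y)) (e : ℕ → ZMod m → V) :
    F (DD w e) = DD w (fun a j => f (e a j)) := by
  simp only [DD, TT, UU, map_sum, map_sub, h]

/-- The elements `E`, reindexed. -/
def ee (m : ℕ) (a : ℕ) (j : ZMod m) : A1Z (m + 1) := ESub (m + 1) (a + 1) (j.val + 1)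

lemma ee_nat (m : ℕ) (a k : ℕ) (hk : k < m) : ee m a (k : ZMod m) = ESub (m + 1) (a + 1) (k + 1) := by
  rw [ee, ZMod.val_cast_of_lt hk]

lemma sum_Icc_one {W : Type*} [AddCommGroup W] (m : ℕ) (f : ℕ → W) :
    ∑ i ∈ Finset.Icc 1 m, f i = ∑ i ∈ Finset.range m, f (i + 1) := by
  induction m with
  | zero => simp
  | succ k ih => rw [Finset.sum_Icc_succ_top (by omega), ih, Finset.sum_range_succ]

lemma coef_eq (m : ℕ) (hm : 2 ≤ m) (a b j k : ℕ) (hab : a < b) (hb : b < m) :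
    epsCoef (m + 1) ((a + 1 : ℕ) : ℤ) ((j + 1 : ℕ) : ℤ) ((b + 1 : ℕ) : ℤ) ((k + 1 : ℕ) : ℤ)
      = (if (k : ZMod m) = j + ((b - a : ℕ) : ZMod m) then 1 else 0)
        - (if (k : ZMod m) = j + (((b - a : ℕ) : ZMod m) - 1) then 1 else 0) := by
  have : Fact (1 < m) := ⟨hm⟩
  have hne : ¬ Int.ModEq (m : ℤ) ((b : ℤ) - a) 0 := by
    rw [Int.modEq_zero_iff_dvd]
    intro h
    have := Int.le_of_dvd (by omega) h
    omega
  have c1 : Int.ModEq (m : ℤ) ((k : ℤ) - j) ((b : ℤ) - a) ↔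
      (k : ZMod m) = j + ((b - a : ℕ) : ZMod m) := by
    rw [← ZMod.intCast_eq_intCast_iff]
    push_cast [Nat.cast_sub hab.le]
    constructor <;> intro h <;> linear_combination h
  have c2 : Int.ModEq (m : ℤ) ((k : ℤ) - j + 1) ((b : ℤ) - a) ↔
      (k : ZMod m) = j + (((b - a : ℕ) : ZMod m) - 1) := by
    rw [← ZMod.intCast_eq_intCast_iff]
    push_cast [Nat.cast_sub hab.le]
    constructor <;> intro h <;> linear_combination h
  rw [epsCoef]
  have e1 : (((m + 1 : ℕ) : ℤ) - 1) = m := by push_cast; ring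
  have e2 : (((b + 1 : ℕ) : ℤ) - ((a + 1 : ℕ) : ℤ)) = b - a := by push_cast; ring
  have e3 : (((k + 1 : ℕ) : ℤ) - ((j + 1 : ℕ) : ℤ)) = k - j := by push_cast; ring
  rw [e1, e2, e3]
  simp only [hne, not_false_iff, and_true, c1, c2]
  by_cases h1 : (k : ZMod m) = j + ((b - a : ℕ) : ZMod m)
  · have h2 : ¬ (k : ZMod m) = j + (((b - a : ℕ) : ZMod m) - 1) := by
      intro h
      have : (1 : ZMod m) = 0 := by linear_combination h - h1
      exact one_ne_zero this
    rw [if_pos h1, if_pos h1, if_neg h2, sub_zero]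
  · simp only [h1, if_false]
    split_ifs <;> simp

lemma pair_abs {V W : Type*} [AddCommGroup V] [AddCommGroup W] (m : ℕ) [NeZero m]
    (w : V →ₗ[ℤ] V →ₗ[ℤ] W) (x y : ℕ → V) (ex ey : ZMod m → V) (r : ZMod m)
    (hex : ∀ k < m, ex (k : ZMod m) = x (k + 1)) (hey : ∀ k < m, ey (k : ZMod m) = y (k + 1))
    (c : ℕ → ℕ → ℤ) (hc : ∀ j k, c j k = (if (k : ZMod m) = j + r then 1 else 0)
        - (if (k : ZMod m) = j + (r - 1) then 1 else 0)) :
    ∑ j ∈ Finset.range m, ∑ k ∈ Finset.range m, c j k • w (x (j + 1)) (y (k + 1))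
      = TT w r ex ey := by
  have h1 : ∀ j ∈ Finset.range m, ∑ k ∈ Finset.range m, c j k • w (x (j + 1)) (y (k + 1))
      = w (ex (j : ZMod m)) (ey ((j : ZMod m) + r))
        - w (ex (j : ZMod m)) (ey ((j : ZMod m) + (r - 1))) := by
    intro j hj
    have hj : j < m := by simpa using hj
    have h2 : ∀ k ∈ Finset.range m, c j k • w (x (j + 1)) (y (k + 1))
      = (if (k : ZMod m) = j + r then w (ex (j : ZMod m)) (ey (k : ZMod m)) else 0)
        - (if (k : ZMod m) = j + (r - 1) then w (ex (j : ZMod m)) (ey (k : ZMod m)) else 0) := by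
      intro k hk
      have hk : k < m := by simpa using hk
      rw [hc, sub_smul, ← hex j hj, ← hey k hk]
      simp only [ite_smul, one_smul, zero_smul]
    rw [Finset.sum_congr rfl h2, sum_range_zmod m (fun z : ZMod m =>
        (if z = j + r then w (ex (j : ZMod m)) (ey z) else 0)
        - (if z = j + (r - 1) then w (ex (j : ZMod m)) (ey z) else 0)),
      Finset.sum_sub_distrib, Finset.sum_ite_eq', Finset.sum_ite_eq']
    simp only [Finset.mem_univ, if_true]
  rw [Finset.sum_congr rfl h1, sum_range_zmod m (fun z => w (ex z) (ey (z + r))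
        - w (ex z) (ey (z + (r - 1)))), Finset.sum_sub_distrib]
  rfl

lemma pair_eq (m : ℕ) [NeZero m] (hm : 2 ≤ m) (a b : ℕ) (hab : a < b) (hb : b < m) :
    ∑ j ∈ Finset.range m, ∑ k ∈ Finset.range m,
      epsCoef (m + 1) ((a + 1 : ℕ) : ℤ) ((j + 1 : ℕ) : ℤ) ((b + 1 : ℕ) : ℤ) ((k + 1 : ℕ) : ℤ) •
        wedge (ESub (m + 1) (a + 1) (j + 1)) (ESub (m + 1) (b + 1) (k + 1))
      = TT (wB ↥(A1Z (m + 1))) ((b - a : ℕ) : ZMod m) (ee m a) (ee m b) :=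
  pair_abs m (wB ↥(A1Z (m + 1))) (ESub (m + 1) (a + 1)) (ESub (m + 1) (b + 1)) (ee m a) (ee m b)
    ((b - a : ℕ) : ZMod m) (ee_nat m a) (ee_nat m b)
    (fun j k => epsCoef (m + 1) ((a + 1 : ℕ) : ℤ) ((j + 1 : ℕ) : ℤ) ((b + 1 : ℕ) : ℤ)
      ((k + 1 : ℕ) : ℤ))
    (fun j k => coef_eq m hm a b j k hab hb)

lemma Delta_eq (m : ℕ) [NeZero m] (hm : 2 ≤ m) : Delta (m + 1) = DD (wB ↥(A1Z (m + 1))) (ee m) := by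
  rw [Delta, IFinset, Finset.sum_filter, Finset.sum_product, Finset.sum_product]
  simp only [Finset.sum_product, Nat.add_sub_cancel, sum_Icc_one]
  have hD : DD (wB ↥(A1Z (m + 1))) (ee m) = ∑ a ∈ Finset.range m, ∑ b ∈ Finset.Ico (a + 1) m,
      TT (wB ↥(A1Z (m + 1))) ((b - a : ℕ) : ZMod m) (ee m a) (ee m b) := by
    rw [DD]
    exact Finset.sum_comm' (by intro x y; simp; omega)
  rw [hD]
  · refine Finset.sum_congr rfl fun a ha => ?_
    rw [Finset.sum_comm]
    have : Finset.Ico (a + 1) m = (Finset.range m).filter (fun b => a < b) := by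
      ext b; simp; omega
    rw [this, Finset.sum_filter]
    refine Finset.sum_congr rfl fun b hb => ?_
    have hb : b < m := by simpa using hb
    split_ifs with hab
    · rw [← pair_eq m hm a b hab hb]
      refine Finset.sum_congr rfl fun j _ => Finset.sum_congr rfl fun k _ => ?_
      rw [if_pos]
      refine ⟨by omega, ?_⟩
      intro h
      have := congrArg Prod.fst h
      simp at this
      omega
    · refine Finset.sum_eq_zero fun j _ => Finset.sum_eq_zero fun k _ => ?_
      split_ifs with h
      · have : a = b := by have := h.1; omega
        subst this
        simp [epsCoef]
      · rfl

lemma H_mem (m b : ℕ) (hb : b < m) :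
    ((∑ a ∈ Finset.range m, (ESub (m + 1) (a + 1) (m + 1 + 1 + a - b)
      - ESub (m + 1) (a + 1) (m + 1 + a - b)) : A1Z (m + 1)) : Lam (m + 1)) ∈ Sgam (m + 1) := by
  set x := eps0 (m + 1) with hx
  set y := eps1 (m + 1) with hy
  have hN : x * y * Nel (m + 1) = Nel (m + 1) := by
    have h := mul_neg_geom_sum (x * y) (m + 1)
    rw [mul_pow, hx, hy, eps0_pow, eps1_pow, ← hx, ← hy] at h
    have h2 : Nel (m + 1) = ∑ i ∈ Finset.range (m + 1), (x * y) ^ i := by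
      simp only [Nel, mul_pow, ← hx, ← hy]
    rw [← h2] at h
    linear_combination -h
  have hNk : ∀ k, x ^ k * y ^ k * Nel (m + 1) = Nel (m + 1) := by
    intro k
    induction k with
    | zero => simp
    | succ k ih =>
      rw [pow_succ, pow_succ]
      linear_combination ih + x ^ k * y ^ k * hN
  have hsum : ((∑ a ∈ Finset.range m, (ESub (m + 1) (a + 1) (m + 1 + 1 + a - b)
      - ESub (m + 1) (a + 1) (m + 1 + a - b)) : A1Z (m + 1)) : Lam (m + 1))
      = - gam (m + 1) ((m - b : ℕ) : ℤ) := by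
    have h1 : ∀ a ∈ Finset.range m, ((ESub (m + 1) (a + 1) (m + 1 + 1 + a - b)
      - ESub (m + 1) (a + 1) (m + 1 + a - b) : A1Z (m + 1)) : Lam (m + 1))
      = y ^ (m - b) * (1 - y) * (y ^ (a + 1) - x ^ (a + 1) * y ^ (a + 1)) := by
      intro a _
      change Ee _ _ _ - Ee _ _ _ = _
      rw [Ee, Ee, ← hx, ← hy, show m + 1 + 1 + a - b = (m - b) + (a + 1) + 1 by omega,
        show m + 1 + a - b = (m - b) + (a + 1) by omega]
      ring
    rw [AddSubmonoidClass.coe_finsetSum, Finset.sum_congr rfl h1, ← Finset.mul_sum]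
    have h2 := Finset.sum_range_succ' (fun i => y ^ i - x ^ i * y ^ i) m
    simp only [pow_zero, mul_one, sub_self, add_zero] at h2
    rw [← h2, Finset.sum_sub_distrib]
    have h3 := mul_neg_geom_sum y (m + 1)
    have h4 : y ^ (m + 1) = 1 := eps1_pow _
    have h5 : MonoidAlgebra.of ℤ (MuMu (m + 1)) (g0 (m + 1) ^ (-((m - b : ℕ) : ℤ))) * x ^ (m - b)
        = 1 := by
      rw [hx, eps0, ← map_pow, ← map_mul, zpow_neg, zpow_natCast, inv_mul_cancel, map_one]
    rw [gam, ← hy]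
    change _ * (_ - Nel (m + 1)) = _
    have h6 := hNk (m - b)
    generalize MonoidAlgebra.of ℤ (MuMu (m + 1)) (g0 (m + 1) ^ (-((m - b : ℕ) : ℤ))) = z at *
    rw [h4] at h3
    linear_combination y ^ (m - b) * h3 + (1 - y) * y ^ (m - b) * Nel (m + 1) * h5
      - z * (1 - y) * h6
  rw [hsum]
  exact neg_mem (Submodule.subset_span ⟨m - b, by omega, rfl⟩)

lemma ESub_period (m i k : ℕ) : ESub (m + 1) i (m + 1 + k) = ESub (m + 1) i k := by
  apply Subtype.ext
  change Ee _ _ _ = Ee _ _ _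
  rw [Ee, Ee, pow_add, eps1_pow, one_mul]

lemma ESub_zero (m i : ℕ) : ESub (m + 1) i 0 = 0 := by
  apply Subtype.ext
  change Ee _ _ _ = 0
  rw [Ee]; simp

lemma ESub_top (m i : ℕ) : ESub (m + 1) i (m + 1) = 0 := by
  rw [← ESub_zero m i, ← ESub_period m i 0]

lemma act0 (m : ℕ) (f : A1Z (m + 1) ≃ₗ[ℤ] A1Z (m + 1))
    (hf : ∀ x : ↥(A1Z (m + 1)), (f x : Lam (m + 1)) = eps0 (m + 1) * (x : Lam (m + 1)))
    (a : ℕ) (j : ZMod m) : f (ee m a j) = ee m (a + 1) j - ee m 0 j := by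
  apply Subtype.ext
  rw [hf]
  change _ * Ee _ _ _ = Ee _ _ _ - Ee _ _ _
  simp only [Ee]
  ring

lemma act1 (m : ℕ) [NeZero m] (hm : 2 ≤ m) (f : A1Z (m + 1) ≃ₗ[ℤ] A1Z (m + 1))
    (hf : ∀ x : ↥(A1Z (m + 1)), (f x : Lam (m + 1)) = eps1 (m + 1) * (x : Lam (m + 1)))
    (a : ℕ) (j : ZMod m) :
    f (ee m a j) = ee m a (j + 1) - (if j + 1 = 0 then 2 else 1 : ℤ) • ee m a 0 := by
  obtain ⟨k, hk, rfl⟩ : ∃ k, k < m ∧ j = (k : ZMod m) := ⟨j.val, ZMod.val_lt j, by simp⟩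
  have h0 : ee m a 0 = ESub (m + 1) (a + 1) 1 := by
    have := ee_nat m a 0 (by omega)
    simpa using this
  by_cases h : k + 1 = m
  · have h1 : (k : ZMod m) + 1 = 0 := by
      have : ((k + 1 : ℕ) : ZMod m) = 0 := by rw [h]; simp
      simpa using this
    rw [h1, if_pos rfl, ee_nat m a k hk, h0, h]
    apply Subtype.ext
    rw [hf]
    change _ * Ee _ _ _ = Ee _ _ _ - (2 : ℤ) • Ee _ _ _
    have h2 := eps1_pow (m + 1)
    simp only [Ee, zsmul_eq_mul]
    push_cast
    linear_combination (-(1 - eps0 (m + 1) ^ (a + 1))) * h2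
  · have h1 : (k : ZMod m) + 1 = ((k + 1 : ℕ) : ZMod m) := by push_cast; rfl
    have h2 : ¬ ((k + 1 : ℕ) : ZMod m) = 0 := by
      intro h3
      have := congrArg ZMod.val h3
      rw [ZMod.val_cast_of_lt (by omega)] at this
      simp at this
    rw [h1, if_neg h2, ee_nat m a k hk, ee_nat m a (k + 1) (by omega), h0, one_smul]
    apply Subtype.ext
    rw [hf]
    change _ * Ee _ _ _ = Ee _ _ _ - Ee _ _ _
    simp only [Ee]
    ring

lemma diff1_abs {V W : Type*} [AddCommGroup V] [AddCommGroup W] (m : ℕ) [NeZero m]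
    (w : V →ₗ[ℤ] V →ₗ[ℤ] W) (hw : ∀ x, w x x = 0) (x y : ℕ → V)
    (hx : x (m + 1) = 0) (d : ℕ) (hd : d + 1 < m) (ex ey : ZMod m → V)
    (hex : ∀ k < m, ex (k : ZMod m) = x (k + 1)) (hey : ∀ k < m, ey (k : ZMod m) = y (k + 1)) :
    TT w ((d + 1 : ℕ) : ZMod m)
      (fun j => ex (j + 1) - (if j + 1 = 0 then 2 else 1 : ℤ) • ex 0)
      (fun j => ey (j + 1) - (if j + 1 = 0 then 2 else 1 : ℤ) • ey 0)
    - TT w ((d + 1 : ℕ) : ZMod m) ex ey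
    = w (x (m - d + 1) - x (m - d)) (y 1) + w (y (d + 2) - y (d + 1)) (x 1) := by
  rw [TT_eps1]
  have h0 : ex 0 = x 1 := by simpa using hex 0 (by omega)
  have h0y : ey 0 = y 1 := by simpa using hey 0 (by omega)
  have r0 : ¬ ((d + 1 : ℕ) : ZMod m) = 0 := by
    intro h3
    have := congrArg ZMod.val h3
    rw [ZMod.val_cast_of_lt (by omega)] at this
    simp at this
  have r1 : ((d + 1 : ℕ) : ZMod m) - 1 = (d : ZMod m) := by push_cast; ring
  have r2 : -((d + 1 : ℕ) : ZMod m) = ((m - (d + 1) : ℕ) : ZMod m) := by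
    rw [Nat.cast_sub (by omega)]; simp
  rw [if_neg r0, r1, r2, hey (d + 1) (by omega), hey d (by omega),
    hex (m - (d + 1)) (by omega), h0, h0y, show m - (d + 1) + 1 = m - d by omega,
    w_swap w hw (x 1) (y (d + 1 + 1) - _)]
  by_cases hd0 : d = 0
  · subst hd0
    simp only [zero_add, Nat.cast_one, sub_self, if_true, h0, map_sub, LinearMap.sub_apply,
      zero_sub, neg_smul, one_smul, Nat.sub_zero, hx, map_neg, LinearMap.neg_apply,
      Nat.reduceAdd]
    abel
  · have r3 : (1 : ZMod m) - ((d + 1 : ℕ) : ZMod m) = ((m - d : ℕ) : ZMod m) := by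
      rw [Nat.cast_sub (by omega)]; simp
    have r4 : ¬ ((d + 1 : ℕ) : ZMod m) = 1 := by
      intro h3
      have h3 : ((d + 1 : ℕ) : ZMod m) = ((1 : ℕ) : ZMod m) := by simpa using h3
      have := congrArg ZMod.val h3
      rw [ZMod.val_cast_of_lt (by omega), ZMod.val_cast_of_lt (by omega)] at this
      omega
    rw [if_neg r4, r3, hex (m - d) (by omega)]
    simp only [map_sub, LinearMap.sub_apply, sub_self, zero_smul]
    abel

lemma diff1 (m : ℕ) [NeZero m] (a b : ℕ) (hab : a < b) (hb : b < m) :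
    TT (wB ↥(A1Z (m + 1))) ((b - a : ℕ) : ZMod m)
      (fun j => ee m a (j + 1) - (if j + 1 = 0 then 2 else 1 : ℤ) • ee m a 0)
      (fun j => ee m b (j + 1) - (if j + 1 = 0 then 2 else 1 : ℤ) • ee m b 0)
    - TT (wB ↥(A1Z (m + 1))) ((b - a : ℕ) : ZMod m) (ee m a) (ee m b)
    = wB ↥(A1Z (m + 1)) (ESub (m + 1) (a + 1) (m + 1 + 1 + a - b) - ESub (m + 1) (a + 1) (m + 1 + a - b))
        (ESub (m + 1) (b + 1) 1)
      + wB ↥(A1Z (m + 1)) (ESub (m + 1) (b + 1) (m + 1 + 1 + b - a) - ESub (m + 1) (b + 1) (m + 1 + b - a))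
        (ESub (m + 1) (a + 1) 1) := by
  obtain ⟨d, rfl⟩ : ∃ d, b = a + (d + 1) := ⟨b - a - 1, by omega⟩
  have h := diff1_abs m (wB ↥(A1Z (m + 1))) wB_self (ESub (m + 1) (a + 1))
      (ESub (m + 1) (a + (d + 1) + 1))
      (ESub_top m _) d (by omega) (ee m a) (ee m (a + (d + 1))) (ee_nat m a) (ee_nat m _)
  have p1 : ESub (m + 1) (a + (d + 1) + 1) (m + 1 + 1 + (a + (d + 1)) - a)
      = ESub (m + 1) (a + (d + 1) + 1) (d + 2) := by
    rw [show m + 1 + 1 + (a + (d + 1)) - a = m + 1 + (d + 2) by omega]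
    exact ESub_period m _ _
  have p2 : ESub (m + 1) (a + (d + 1) + 1) (m + 1 + (a + (d + 1)) - a)
      = ESub (m + 1) (a + (d + 1) + 1) (d + 1) := by
    rw [show m + 1 + (a + (d + 1)) - a = m + 1 + (d + 1) by omega]
    exact ESub_period m _ _
  have p3 : m + 1 + a - (a + (d + 1)) = m - d := by omega
  have p4 : m + 1 + 1 + a - (a + (d + 1)) = m - d + 1 := by omega
  have p5 : a + (d + 1) - a = d + 1 := by omega
  rw [p1, p2, p3, p4, p5]
  exact h

lemma main_aux (m : ℕ) (hm : 2 ≤ m) :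
    ∃ (f0 f1 : ↥(A1Z (m + 1)) ≃ₗ[ℤ] ↥(A1Z (m + 1)))
      (F0 F1 : ↥(Wedge2 ↥(A1Z (m + 1))) ≃ₗ[ℤ] ↥(Wedge2 ↥(A1Z (m + 1)))),
      (∀ x : ↥(A1Z (m + 1)), (f0 x : Lam (m + 1)) = eps0 (m + 1) * (x : Lam (m + 1))) ∧
      (∀ x : ↥(A1Z (m + 1)), (f1 x : Lam (m + 1)) = eps1 (m + 1) * (x : Lam (m + 1))) ∧
      (∀ a b : ↥(A1Z (m + 1)), F0 (wedge a b) = wedge (f0 a) (f0 b)) ∧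
      (∀ a b : ↥(A1Z (m + 1)), F1 (wedge a b) = wedge (f1 a) (f1 b)) ∧
      F0 (Delta (m + 1)) - Delta (m + 1) ∈ SwedgeA1 (m + 1) ∧
      F1 (Delta (m + 1)) - Delta (m + 1) ∈ SwedgeA1 (m + 1) := by
  have : NeZero m := ⟨by omega⟩
  have u0 : eps0 (m + 1) * eps0 (m + 1) ^ m = 1 := by
    rw [← pow_succ', eps0_pow]
  have u1 : eps1 (m + 1) * eps1 (m + 1) ^ m = 1 := by
    rw [← pow_succ', eps1_pow]
  have hf0 : ∀ x : ↥(A1Z (m + 1)), (mulEquiv (m + 1) _ _ u0 x : Lam (m + 1))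
      = eps0 (m + 1) * (x : Lam (m + 1)) := fun x => rfl
  have hf1 : ∀ x : ↥(A1Z (m + 1)), (mulEquiv (m + 1) _ _ u1 x : Lam (m + 1))
      = eps1 (m + 1) * (x : Lam (m + 1)) := fun x => rfl
  refine ⟨mulEquiv (m + 1) _ _ u0, mulEquiv (m + 1) _ _ u1, wMap (mulEquiv (m + 1) _ _ u0),
    wMap (mulEquiv (m + 1) _ _ u1), hf0, hf1, wMap_wedge _, wMap_wedge _, ?_, ?_⟩
  · rw [Delta_eq m hm, map_DD (wB ↥(A1Z (m + 1))) _ _ (wMap_wedge _)]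
    have h : (fun (a : ℕ) (j : ZMod m) => mulEquiv (m + 1) _ _ u0 (ee m a j))
        = fun a => ee m (a + 1) - ee m 0 := by
      funext a j
      exact act0 m _ hf0 a j
    rw [h, DD_eps0 (wB ↥(A1Z (m + 1))) wB_self, sub_self]
    · exact zero_mem _
    · funext j
      apply Subtype.ext
      change Ee _ _ _ = 0
      rw [Ee, eps0_pow]; simp
  · rw [Delta_eq m hm, map_DD (wB ↥(A1Z (m + 1))) _ _ (wMap_wedge _)]
    simp only [act1 m hm _ hf1]
    rw [DD, DD, ← Finset.sum_sub_distrib]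
    simp only [← Finset.sum_sub_distrib]
    have h : ∀ b ∈ Finset.range m, ∀ a ∈ Finset.range b, _ := fun b hb a ha =>
      diff1 m a b (by simpa using ha) (by simpa using hb)
    rw [Finset.sum_congr rfl fun b hb => Finset.sum_congr rfl (h b hb)]
    rw [sum_sym (fun a b => wB ↥(A1Z (m + 1)) (ESub (m + 1) (a + 1) (m + 1 + 1 + a - b)
      - ESub (m + 1) (a + 1) (m + 1 + a - b)) (ESub (m + 1) (b + 1) 1))]
    · refine sum_mem fun b hb => ?_
      have hb : b < m := by simpa using hb
      rw [← LinearMap.sum_apply, ← map_sum]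
      exact Submodule.subset_span ⟨_, _, H_mem m b hb, rfl⟩
    · intro a
      rw [show m + 1 + 1 + a - a = m + 1 + 1 by omega, show m + 1 + a - a = m + 1 by omega,
        ESub_period, ESub_top, sub_zero, wB_self]

/-- multiplication by `ε₀` (resp. `ε₁`) is a `ℤ`-linear automorphism of `A₁`,
inducing a `ℤ`-linear automorphism of `⋀²_ℤ A₁` with `a ∧ b ↦ (ε₀·a) ∧ (ε₀·b)`
(resp. `(ε₁·a) ∧ (ε₁·b)`), and both `(ε₀·Δ) − Δ` and `(ε₁·Δ) − Δ` lie in `S ∧ A₁`. -/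
theorem stmt_14 (n : ℕ) (hn : 3 ≤ n) :
    ∃ (f0 f1 : ↥(A1Z n) ≃ₗ[ℤ] ↥(A1Z n))
      (F0 F1 : ↥(Wedge2 ↥(A1Z n)) ≃ₗ[ℤ] ↥(Wedge2 ↥(A1Z n))),
      (∀ x : ↥(A1Z n), (f0 x : Lam n) = eps0 n * (x : Lam n)) ∧
      (∀ x : ↥(A1Z n), (f1 x : Lam n) = eps1 n * (x : Lam n)) ∧
      (∀ a b : ↥(A1Z n), F0 (wedge a b) = wedge (f0 a) (f0 b)) ∧
      (∀ a b : ↥(A1Z n), F1 (wedge a b) = wedge (f1 a) (f1 b)) ∧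
      F0 (Delta n) - Delta n ∈ SwedgeA1 n ∧
      F1 (Delta n) - Delta n ∈ SwedgeA1 n := by
  obtain ⟨m, rfl⟩ : ∃ m, n = m + 1 := ⟨n - 1, by omega⟩
  exact main_aux m (by omega)
end
end

section
/- Let τ : Λ → Λ be the ring automorphism induced by the group automorphism of μₙ × μₙ interchanging the two factors, so that τ(ε₀) = ε₁ and τ(ε₁) = ε₀. Then τ preserves the ideal A₁ and the submodule S, τ induces a ℤ-linear automorphism of ∧²_ℤ A₁ sending a ∧ b to τ(a) ∧ τ(b), and τ(Δ) − Δ lies in the submodule S ∧ A₁; equivalently, the image of Δ in ∧²_ℤ(A₁/S) is invariant under τ. -/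
noncomputable section

/-- membership sum along the integer diagonal `j - i = c`. -/
def Pdiag {M : Type*} [AddCommGroup M] (R : Finset (ℕ × ℕ)) (e : ℕ × ℕ → M) (c : ℤ) : M :=
  ∑ p ∈ R, if (p.2 : ℤ) - p.1 = c then e p else 0

/-- coefficient of Δ extended by zero. -/
def a0 (n : ℕ) (p q : ℕ × ℕ) : ℤ :=
  if p.1 ≤ q.1 ∧ p ≠ q then epsCoef n p.1 p.2 q.1 q.2 else 0

def kk (n : ℕ) (p q : ℕ × ℕ) : ℤ :=
  (if ((q.2 : ℤ) - q.1) = ((p.2 : ℤ) - p.1) - 1 then 1 else 0)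
  + 2 * (if ((q.2 : ℤ) - q.1) = ((p.2 : ℤ) - p.1) + (n - 1) then 1 else 0)
  - 2 * (if ((q.2 : ℤ) - q.1) = ((p.2 : ℤ) - p.1) + n then 1 else 0)

lemma modEq_small (m a b : ℤ) (h1 : a - b < 2 * m) (h2 : -(2 * m) < a - b) :
    Int.ModEq m a b ↔ (a - b = 0 ∨ a - b = m ∨ a - b = -m) := by
  rw [Int.modEq_iff_dvd]
  constructor
  · rintro ⟨k, hk⟩
    have hm : 0 < m := by omega
    have k1 : k < 2 := by
      by_contra h
      nlinarith
    have k2 : -2 < k := by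
      by_contra h
      nlinarith
    have : k = 0 ∨ k = 1 ∨ k = -1 := by omega
    rcases this with rfl | rfl | rfl
    · left; linarith
    · right; right; linarith
    · right; left; linarith
  · rintro (h | h | h)
    · exact ⟨0, by linarith⟩
    · exact ⟨-1, by linarith⟩
    · exact ⟨1, by linarith⟩

lemma a0_eq (n : ℕ) (hn : 3 ≤ n) (p q : ℕ × ℕ)
    (hp1 : 1 ≤ p.1 ∧ p.1 ≤ n - 1) (hp2 : 1 ≤ p.2 ∧ p.2 ≤ n - 1)
    (hq1 : 1 ≤ q.1 ∧ q.1 ≤ n - 1) (hq2 : 1 ≤ q.2 ∧ q.2 ≤ n - 1) (u v : ℤ)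
    (hu : u = (q.1 : ℤ) - p.1) (hv : v = (q.2 : ℤ) - p.2) :
    a0 n p q = if 0 < u then (if v = u ∨ v = u - (n - 1) then 1 else
      if v = u - 1 ∨ v = u - n then -1 else 0) else 0 := by
  obtain ⟨i1, j1⟩ := p
  obtain ⟨i2, j2⟩ := q
  simp only at *
  unfold a0 epsCoef
  simp only [ne_eq, Prod.mk.injEq, modEq_small ((n : ℤ) - 1) ((j2 : ℤ) - j1) ((i2 : ℤ) - i1) (by omega) (by omega),
    modEq_small ((n : ℤ) - 1) ((j2 : ℤ) - j1 + 1) ((i2 : ℤ) - i1) (by omega) (by omega),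
    modEq_small ((n : ℤ) - 1) ((i2 : ℤ) - i1) 0 (by omega) (by omega)]
  by_cases h : 0 < u
  · rw [if_pos h, if_pos (by omega)]
    split_ifs <;> first | rfl | (exfalso; omega)
  · rw [if_neg h]
    by_cases h' : i1 ≤ i2 ∧ ¬ (i1 = i2 ∧ j1 = j2)
    · rw [if_pos h', if_neg (by omega), if_neg (by omega)]
    · rw [if_neg h']

/-- the coefficient as a function of the differences -/
def cf (n : ℕ) (u v : ℤ) : ℤ := if 0 < u then (if v = u ∨ v = u - (n - 1) then 1 else
      if v = u - 1 ∨ v = u - n then -1 else 0) else 0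

def cg (n : ℕ) (w : ℤ) : ℤ :=
  (if w = -1 then 1 else 0) + 2 * (if w = n - 1 then 1 else 0) - 2 * (if w = n then 1 else 0)

set_option maxHeartbeats 4000000 in
lemma cg_diff (n : ℕ) (hn : 3 ≤ n) (w : ℤ) : cg n w - cg n (-w) =
    if w = -1 then 1 else if w = 1 then -1 else if w = n - 1 then 2 else if w = 1 - n then -2
    else if w = n then -2 else if w = -n then 2 else 0 := by
  unfold cg
  by_cases h1 : w = -1
  · split_ifs <;> omega
  by_cases h2 : w = 1
  · split_ifs <;> omega
  by_cases h3 : w = n - 1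
  · split_ifs <;> omega
  by_cases h4 : w = 1 - n
  · split_ifs <;> omega
  by_cases h5 : w = n
  · split_ifs <;> omega
  by_cases h6 : w = -n
  · split_ifs <;> omega
  simp only [h1, h2, h3, h4, h5, h6, if_false]
  rw [if_neg (by omega), if_neg (by omega), if_neg (by omega)]
  rfl

lemma cf_neg (n : ℕ) (u v : ℤ) (h : u ≤ 0) : cf n u v = 0 := if_neg (by omega)

lemma cf_pos (n : ℕ) (u v : ℤ) (h : 0 < u) : cf n u v =
    (if v = u ∨ v = u - (n - 1) then 1 else if v = u - 1 ∨ v = u - n then -1 else 0) := if_pos h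

set_option maxHeartbeats 4000000 in
lemma cf_cg (n : ℕ) (hn : 3 ≤ n) (u v : ℤ) (h1 : u < n - 1) (h2 : -u < n - 1) (h3 : v < n - 1)
    (h4 : -v < n - 1) :
    cf n v u - cf n u v - cf n (-v) (-u) + cf n (-u) (-v) = cg n (v - u) - cg n (-(v - u)) := by
  rw [cg_diff n hn]
  rcases lt_trichotomy u 0 with h | h | h <;> rcases lt_trichotomy v 0 with h' | h' | h'
  · rw [cf_neg n v u h'.le, cf_neg n u v h.le, cf_pos n (-v) _ (by omega),
      cf_pos n (-u) _ (by omega)]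
    split_ifs <;> omega
  · rw [cf_neg n v u h'.le, cf_neg n u v h.le, cf_neg n (-v) _ (by omega),
      cf_pos n (-u) _ (by omega)]
    split_ifs <;> omega
  · rw [cf_pos n v u h', cf_neg n u v h.le, cf_neg n (-v) _ (by omega),
      cf_pos n (-u) _ (by omega)]
    split_ifs <;> omega
  · rw [cf_neg n v u h'.le, cf_neg n u v h.le, cf_pos n (-v) _ (by omega),
      cf_neg n (-u) _ (by omega)]
    split_ifs <;> omega
  · rw [cf_neg n v u h'.le, cf_neg n u v h.le, cf_neg n (-v) _ (by omega),
      cf_neg n (-u) _ (by omega)]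
    split_ifs <;> omega
  · rw [cf_pos n v u h', cf_neg n u v h.le, cf_neg n (-v) _ (by omega),
      cf_neg n (-u) _ (by omega)]
    split_ifs <;> omega
  · rw [cf_neg n v u h'.le, cf_pos n u v h, cf_pos n (-v) _ (by omega),
      cf_neg n (-u) _ (by omega)]
    split_ifs <;> omega
  · rw [cf_neg n v u h'.le, cf_pos n u v h, cf_neg n (-v) _ (by omega),
      cf_neg n (-u) _ (by omega)]
    split_ifs <;> omega
  · rw [cf_pos n v u h', cf_pos n u v h, cf_neg n (-v) _ (by omega),
      cf_neg n (-u) _ (by omega)]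
    split_ifs <;> omega

lemma kk_cg (n : ℕ) (p q : ℕ × ℕ) (w : ℤ) (hw : w = ((q.2 : ℤ) - p.2) - (q.1 - p.1)) :
    kk n p q = cg n w := by
  unfold kk cg
  have e1 : (((q.2 : ℤ) - q.1) = ((p.2 : ℤ) - p.1) - 1) ↔ w = -1 := by omega
  have e2 : (((q.2 : ℤ) - q.1) = ((p.2 : ℤ) - p.1) + (n - 1)) ↔ w = n - 1 := by omega
  have e3 : (((q.2 : ℤ) - q.1) = ((p.2 : ℤ) - p.1) + n) ↔ w = n := by omega
  simp only [e1, e2, e3]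

lemma kk_symm (n : ℕ) (hn : 3 ≤ n) (p q : ℕ × ℕ)
    (hp1 : 1 ≤ p.1 ∧ p.1 ≤ n - 1) (hp2 : 1 ≤ p.2 ∧ p.2 ≤ n - 1)
    (hq1 : 1 ≤ q.1 ∧ q.1 ≤ n - 1) (hq2 : 1 ≤ q.2 ∧ q.2 ≤ n - 1) :
    a0 n p.swap q.swap - a0 n p q - kk n p q = a0 n q.swap p.swap - a0 n q p - kk n q p := by
  have a1 := a0_eq n hn p q hp1 hp2 hq1 hq2 _ _ rfl rfl
  have a2 := a0_eq n hn q p hq1 hq2 hp1 hp2 (-((q.1 : ℤ) - p.1)) (-((q.2 : ℤ) - p.2))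
    (by ring) (by ring)
  have a3 := a0_eq n hn p.swap q.swap hp2 hp1 hq2 hq1 ((q.2 : ℤ) - p.2) ((q.1 : ℤ) - p.1) rfl rfl
  have a4 := a0_eq n hn q.swap p.swap hq2 hq1 hp2 hp1 (-((q.2 : ℤ) - p.2)) (-((q.1 : ℤ) - p.1))
    (by simp) (by simp)
  rw [← cf] at a1 a2 a3 a4
  have b1 := kk_cg n p q _ rfl
  have b2 := kk_cg n q p (-(((q.2 : ℤ) - p.2) - (q.1 - p.1))) (by ring)
  have c := cf_cg n hn ((q.1 : ℤ) - p.1) ((q.2 : ℤ) - p.2) (by omega) (by omega) (by omega)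
    (by omega)
  rw [a1, a2, a3, a4, b1, b2]
  linarith

lemma sum_symm_zero {M W : Type*} [AddCommGroup M] [AddCommGroup W]
    (B : M →ₗ[ℤ] M →ₗ[ℤ] W) (hB : ∀ x, B x x = 0) (R : Finset (ℕ × ℕ)) (e : ℕ × ℕ → M)
    (s : ℕ × ℕ → ℕ × ℕ → ℤ) (hs : ∀ p ∈ R, ∀ q ∈ R, s p q = s q p) :
    ∑ x ∈ R ×ˢ R, s x.1 x.2 • B (e x.1) (e x.2) = 0 := by
  apply Finset.sum_involution (fun x _ => x.swap)
  · rintro ⟨p, q⟩ h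
    simp only [Finset.mem_product] at h
    have h1 : B (e p + e q) (e p + e q) = 0 := hB _
    simp only [map_add, LinearMap.add_apply, hB, zero_add, add_zero] at h1
    simp only [Prod.swap]
    rw [hs q h.2 p h.1, ← smul_add, add_comm, h1, smul_zero]
  · rintro ⟨p, q⟩ h h0 h1
    simp only [Prod.swap, Prod.mk.injEq] at h1
    apply h0
    simp [h1.1, hB]
  · intros; rfl
  · rintro ⟨p, q⟩ h
    simp only [Finset.mem_product] at h ⊢
    exact ⟨h.2, h.1⟩

lemma diag_sum {M W : Type*} [AddCommGroup M] [AddCommGroup W]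
    (B : M →ₗ[ℤ] M →ₗ[ℤ] W) (R : Finset (ℕ × ℕ)) (e : ℕ × ℕ → M) (n : ℕ)
    (hR : ∀ p ∈ R, -(n : ℤ) < (p.2 : ℤ) - p.1 ∧ (p.2 : ℤ) - p.1 < n) (d : ℤ) :
    ∑ x ∈ R ×ˢ R, (if ((x.2.2 : ℤ) - x.2.1) = ((x.1.2 : ℤ) - x.1.1) + d then (1 : ℤ) else 0) •
        B (e x.1) (e x.2) =
      ∑ t ∈ Finset.range n, (B (Pdiag R e (t + 1)) (Pdiag R e (t + 1 + d)) +
        B (Pdiag R e (t + 1 - n)) (Pdiag R e (t + 1 - n + d))) := by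
  have key : ∀ p ∈ R, ∀ f : ℤ → W,
      ∑ t ∈ Finset.range n, ((if ((p.2 : ℤ) - p.1) = (t : ℤ) + 1 then f (t + 1) else 0) +
        (if ((p.2 : ℤ) - p.1) = (t : ℤ) + 1 - n then f (t + 1 - n) else 0)) =
        f ((p.2 : ℤ) - p.1) := by
    intro p hp f
    have h := hR p hp
    obtain ⟨t0, ht0⟩ : ∃ t0 : ℕ, t0 < n ∧ (((p.2 : ℤ) - p.1) = (t0 : ℤ) + 1 ∨
        ((p.2 : ℤ) - p.1) = (t0 : ℤ) + 1 - n) := by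
      by_cases h0 : 0 < (p.2 : ℤ) - p.1
      · exact ⟨((p.2 : ℤ) - p.1 - 1).toNat, by omega, by left; omega⟩
      · exact ⟨((p.2 : ℤ) - p.1 - 1 + n).toNat, by omega, by right; omega⟩
    rw [Finset.sum_eq_single t0]
    · rcases ht0.2 with h1 | h1
      · rw [if_pos h1, if_neg (by omega), h1, add_zero]
      · rw [if_neg (by omega), if_pos h1, h1, zero_add]
    · intro b hb hbt
      rw [Finset.mem_range] at hb
      rw [if_neg (by omega), if_neg (by omega), add_zero]
    · intro h; exact absurd (Finset.mem_range.2 ht0.1) h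
  have expand : ∀ c : ℤ, B (Pdiag R e c) (Pdiag R e (c + d)) =
      ∑ p ∈ R, if ((p.2 : ℤ) - p.1) = c then B (e p) (Pdiag R e (c + d)) else 0 := by
    intro c
    rw [Pdiag, map_sum, LinearMap.sum_apply]
    apply Finset.sum_congr rfl
    intro p _
    split_ifs <;> simp
  simp_rw [expand]
  simp_rw [← Finset.sum_add_distrib]
  rw [Finset.sum_comm, Finset.sum_product]
  apply Finset.sum_congr rfl
  intro p hp
  have := key p hp (fun c => B (e p) (Pdiag R e (c + d)))
  rw [this]
  simp only [Pdiag, map_sum]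
  apply Finset.sum_congr rfl
  intro q _
  split_ifs <;> simp

lemma abstract_main {M W : Type*} [AddCommGroup M] [AddCommGroup W]
    (B : M →ₗ[ℤ] M →ₗ[ℤ] W) (hB : ∀ x, B x x = 0) (e : ℕ × ℕ → M) (n : ℕ) (hn : 3 ≤ n)
    (R : Finset (ℕ × ℕ)) (hRdef : R = Finset.Icc 1 (n - 1) ×ˢ Finset.Icc 1 (n - 1))
    (hD : ∀ c : ℕ, c ≤ n → ∀ x, B (Pdiag R e c + Pdiag R e (c - n)) x = B (Pdiag R e 0) x) :
    ∑ q ∈ IFinset n, epsCoef n (q.1.1 : ℤ) (q.1.2 : ℤ) (q.2.1 : ℤ) (q.2.2 : ℤ) •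
        B (e q.1.swap) (e q.2.swap) =
    ∑ q ∈ IFinset n, epsCoef n (q.1.1 : ℤ) (q.1.2 : ℤ) (q.2.1 : ℤ) (q.2.2 : ℤ) •
        B (e q.1) (e q.2) := by
  have hmem : ∀ p ∈ R, (1 ≤ p.1 ∧ p.1 ≤ n - 1) ∧ (1 ≤ p.2 ∧ p.2 ≤ n - 1) := by
    intro p hp
    simpa [hRdef] using hp
  have hR : ∀ p ∈ R, -(n : ℤ) < (p.2 : ℤ) - p.1 ∧ (p.2 : ℤ) - p.1 < n := by
    intro p hp
    have := hmem p hp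
    omega
  have h1 : ∀ f : ℕ × ℕ → ℕ × ℕ → W,
      ∑ q ∈ IFinset n, epsCoef n (q.1.1 : ℤ) (q.1.2 : ℤ) (q.2.1 : ℤ) (q.2.2 : ℤ) • f q.1 q.2
      = ∑ x ∈ R ×ˢ R, a0 n x.1 x.2 • f x.1 x.2 := by
    intro f
    rw [IFinset, hRdef, Finset.sum_filter]
    apply Finset.sum_congr rfl
    intro x _
    unfold a0
    split_ifs <;> simp
  rw [h1 (fun p q => B (e p.swap) (e q.swap)), h1 (fun p q => B (e p) (e q))]
  have h2 : ∑ x ∈ R ×ˢ R, a0 n x.1 x.2 • B (e x.1.swap) (e x.2.swap) =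
      ∑ x ∈ R ×ˢ R, a0 n x.1.swap x.2.swap • B (e x.1) (e x.2) := by
    apply Finset.sum_nbij' (fun x => (x.1.swap, x.2.swap)) (fun x => (x.1.swap, x.2.swap))
    · rintro ⟨⟨a, b⟩, ⟨c, d⟩⟩ h
      simp [hRdef] at h ⊢; omega
    · rintro ⟨⟨a, b⟩, ⟨c, d⟩⟩ h
      simp [hRdef] at h ⊢; omega
    · intros; simp
    · intros; simp
    · intros; simp
  rw [h2, ← sub_eq_zero, ← Finset.sum_sub_distrib]
  have h3 := sum_symm_zero B hB R e
    (fun p q => a0 n p.swap q.swap - a0 n p q - kk n p q) (fun p hp q hq =>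
      kk_symm n hn p q (hmem p hp).1 (hmem p hp).2 (hmem q hq).1 (hmem q hq).2)
  have hsk : ∀ x y, B x y = - B y x := by
    intro x y
    have h1 : B (x + y) (x + y) = 0 := hB _
    simp only [map_add, LinearMap.add_apply, hB, zero_add, add_zero] at h1
    rw [eq_neg_iff_add_eq_zero, add_comm]; exact h1
  have h4 : ∑ x ∈ R ×ˢ R, kk n x.1 x.2 • B (e x.1) (e x.2) = 0 := by
    have hz : ∀ c : ℤ, (c ≤ -(n : ℤ) ∨ (n : ℤ) ≤ c) → Pdiag R e c = 0 := by
      intro c hc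
      apply Finset.sum_eq_zero
      intro p hp
      have := hR p hp
      rw [if_neg (by omega)]
    have e1 := diag_sum B R e n hR (-1)
    have e2 := diag_sum B R e n hR ((n : ℤ) - 1)
    have e3 := diag_sum B R e n hR n
    have : ∑ x ∈ R ×ˢ R, kk n x.1 x.2 • B (e x.1) (e x.2) =
      (∑ t ∈ Finset.range n, (B (Pdiag R e (t + 1)) (Pdiag R e (t + 1 + (-1))) +
        B (Pdiag R e (t + 1 - n)) (Pdiag R e (t + 1 - n + (-1)))))
      + (2 : ℤ) • (∑ t ∈ Finset.range n, (B (Pdiag R e (t + 1)) (Pdiag R e (t + 1 + (n - 1))) +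
        B (Pdiag R e (t + 1 - n)) (Pdiag R e (t + 1 - n + (n - 1)))))
      - (2 : ℤ) • (∑ t ∈ Finset.range n, (B (Pdiag R e (t + 1)) (Pdiag R e (t + 1 + n)) +
        B (Pdiag R e (t + 1 - n)) (Pdiag R e (t + 1 - n + n)))) := by
      rw [← e1, ← e2, ← e3, Finset.smul_sum, Finset.smul_sum, ← Finset.sum_add_distrib,
        ← Finset.sum_sub_distrib]
      apply Finset.sum_congr rfl
      intro x _
      rw [kk, smul_smul, smul_smul, ← add_smul, ← sub_smul, sub_eq_add_neg _ (1 : ℤ)]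
    rw [this, Finset.smul_sum, Finset.smul_sum, ← Finset.sum_add_distrib,
        ← Finset.sum_sub_distrib]
    have hterm : ∀ t ∈ Finset.range n,
        ((B (Pdiag R e (t + 1)) (Pdiag R e (t + 1 + (-1))) +
        B (Pdiag R e (t + 1 - n)) (Pdiag R e (t + 1 - n + (-1))))
      + (2 : ℤ) • ((B (Pdiag R e (t + 1)) (Pdiag R e (t + 1 + (n - 1))) +
        B (Pdiag R e (t + 1 - n)) (Pdiag R e (t + 1 - n + (n - 1)))))
      - (2 : ℤ) • ((B (Pdiag R e (t + 1)) (Pdiag R e (t + 1 + n)) +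
        B (Pdiag R e (t + 1 - n)) (Pdiag R e (t + 1 - n + n)))))
      = B (Pdiag R e 0) (Pdiag R e (t : ℕ)) - B (Pdiag R e 0) (Pdiag R e ((t + 1 : ℕ) : ℤ)) := by
      intro t ht
      rw [Finset.mem_range] at ht
      rw [hz (t + 1 + (n - 1)) (by omega), hz (t + 1 + n) (by omega)]
      rw [show (t : ℤ) + 1 + (-1) = t by ring, show (t : ℤ) + 1 - n + (-1) = t - n by ring,
        show (t : ℤ) + 1 - n + (n - 1) = t by ring, show (t : ℤ) + 1 - n + n = t + 1 by ring]
      have d1 : ∀ x, B (Pdiag R e (t - n)) x = B (Pdiag R e 0) x - B (Pdiag R e t) x := by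
        intro x
        rw [← hD t ht.le x, map_add, LinearMap.add_apply]; abel
      have d2 : ∀ x, B (Pdiag R e (t + 1 - n)) x =
          B (Pdiag R e 0) x - B (Pdiag R e (t + 1)) x := by
        intro x
        have := hD (t + 1) ht x
        push_cast at this
        rw [← this, map_add, LinearMap.add_apply]; abel
      have d3 : ∀ x, B x (Pdiag R e (t - n)) = B x (Pdiag R e 0) - B x (Pdiag R e t) := by
        intro x
        rw [hsk, d1, hsk x, hsk x (Pdiag R e t)]; abel
      push_cast
      simp only [d2, d3, map_zero, hB]
      rw [hsk (Pdiag R e (t + 1)) (Pdiag R e 0)]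
      abel
    rw [Finset.sum_congr rfl hterm]
    rw [Finset.sum_range_sub' (fun t : ℕ => B (Pdiag R e 0) (Pdiag R e (t : ℤ)))]
    rw [hz n (by omega)]
    simp [hB]
  simp only [sub_smul, Finset.sum_sub_distrib] at h3 ⊢
  rw [h4, sub_zero] at h3
  exact h3

lemma eps_mul_Nel (n : ℕ) : (eps0 n * eps1 n) * Nel n = Nel n := by
  have h : (eps0 n * eps1 n) ^ n = 1 := by rw [mul_pow, eps0_pow, eps1_pow, one_mul]
  have h1 : Nel n = ∑ k ∈ Finset.range n, (eps0 n * eps1 n) ^ k := by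
    simp only [Nel, mul_pow]
  have h2 := mul_neg_geom_sum (eps0 n * eps1 n) n
  rw [← h1, h, sub_self, sub_mul, one_mul, sub_eq_zero] at h2
  exact h2.symm

lemma eps_pow_mul_Nel (n i : ℕ) : (eps0 n ^ i * eps1 n ^ i) * Nel n = Nel n := by
  induction i with
  | zero => simp
  | succ k ih =>
    calc _ = (eps0 n ^ k * eps1 n ^ k) * ((eps0 n * eps1 n) * Nel n) := by ring
      _ = _ := by rw [eps_mul_Nel, ih]

lemma gam_eq (n i : ℕ) : gam n i = eps1 n ^ i * (1 - eps1 n) * Nel n := by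
  have h : MonoidAlgebra.of ℤ (MuMu n) (g0 n ^ (-(i : ℤ))) * eps0 n ^ i = 1 := by
    rw [eps0, ← map_pow, ← map_mul]
    simp [MonoidAlgebra.one_def]
  rw [gam]
  nth_rewrite 1 [← eps_pow_mul_Nel n i]
  calc _ = (MonoidAlgebra.of ℤ (MuMu n) (g0 n ^ (-(i : ℤ))) * eps0 n ^ i) *
        (eps1 n ^ i * (1 - eps1 n) * Nel n) := by ring
    _ = _ := by rw [h, one_mul]

lemma gam_mem (n i : ℕ) (hi : i < n) : eps1 n ^ i * (1 - eps1 n) * Nel n ∈ Sgam n :=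
  Submodule.subset_span ⟨i, hi, (gam_eq n i).symm⟩

lemma sub_mem_S (n c : ℕ) (hc : c ≤ n) : (eps1 n ^ c - 1) * Nel n ∈ Sgam n := by
  have : (eps1 n ^ c - 1) * Nel n =
      - ∑ i ∈ Finset.range c, eps1 n ^ i * (1 - eps1 n) * Nel n := by
    rw [← Finset.sum_mul, ← Finset.sum_mul, ← geom_sum_mul]; ring
  rw [this]
  apply Submodule.neg_mem
  apply Submodule.sum_mem
  intro i hi
  exact gam_mem n i (by have := Finset.mem_range.1 hi; omega)

/-- the swap automorphism. -/
def tau (n : ℕ) : Lam n ≃+* Lam n :=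
  (MonoidAlgebra.domCongr ℤ ℤ (MulEquiv.prodComm : MuMu n ≃* MuMu n)).toRingEquiv

lemma tau_eps0 (n : ℕ) : tau n (eps0 n) = eps1 n := by
  simp [tau, eps0, eps1, g0, g1]

lemma tau_eps1 (n : ℕ) : tau n (eps1 n) = eps0 n := by
  simp [tau, eps0, eps1, g0, g1]

lemma tau_tau (n : ℕ) (x : Lam n) : tau n (tau n x) = x := by
  induction x using MonoidAlgebra.induction_on with
  | of g => simp [tau]
  | add a b ha hb => rw [map_add, map_add, ha, hb]
  | smul r a ha => rw [map_zsmul, map_zsmul, ha]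

lemma tau_A1 (n : ℕ) (x : Lam n) (hx : x ∈ A1 n) : tau n x ∈ A1 n := by
  rw [A1, Ideal.mem_span_singleton] at *
  obtain ⟨y, rfl⟩ := hx
  refine ⟨tau n y, ?_⟩
  simp only [map_mul, map_sub, tau_eps0, tau_eps1, map_one]
  ring

lemma tau_Nel (n : ℕ) : tau n (Nel n) = Nel n := by
  simp only [Nel, map_sum, map_mul, map_pow, tau_eps0, tau_eps1]
  exact Finset.sum_congr rfl fun _ _ => mul_comm _ _

lemma eps0_Nel (n i : ℕ) (hi : i ≤ n) : eps0 n ^ i * Nel n = eps1 n ^ (n - i) * Nel n := by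
  have h : eps1 n ^ (n - i) * eps1 n ^ i = 1 := by
    rw [← pow_add, Nat.sub_add_cancel hi, eps1_pow]
  calc _ = (eps1 n ^ (n - i) * eps1 n ^ i) * (eps0 n ^ i * Nel n) := by rw [h, one_mul]
    _ = eps1 n ^ (n - i) * ((eps0 n ^ i * eps1 n ^ i) * Nel n) := by ring
    _ = _ := by rw [eps_pow_mul_Nel]

lemma tau_S (n : ℕ) (x : Lam n) (hx : x ∈ Sgam n) : tau n x ∈ Sgam n := by
  induction hx using Submodule.span_induction with
  | mem x h =>
    obtain ⟨i, hi, rfl⟩ := h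
    have : tau n (gam n i) =
        - (eps1 n ^ (n - (i + 1)) * (1 - eps1 n) * Nel n) := by
      rw [gam_eq]
      simp only [map_mul, map_sub, map_pow, map_one, tau_eps1, tau_Nel]
      have h1 := eps0_Nel n i hi.le
      have h2 := eps0_Nel n (i + 1) hi
      have h3 : eps1 n ^ (n - i) = eps1 n ^ (n - (i + 1)) * eps1 n := by
        rw [← pow_succ]; congr 1; omega
      rw [h3] at h1
      calc _ = eps0 n ^ i * Nel n - eps0 n ^ (i + 1) * Nel n := by ring
        _ = _ := by rw [h1, h2]; ring
    rw [this]
    exact Submodule.neg_mem _ (gam_mem n _ (by omega))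
  | zero => simp
  | add x y _ _ hx hy => rw [map_add]; exact Submodule.add_mem _ hx hy
  | smul a x _ hx => rw [map_zsmul]; exact Submodule.smul_mem _ a hx

/-- restriction of `tau` to `A1`. -/
def tauA (n : ℕ) : ↥(A1Z n) →ₗ[ℤ] ↥(A1Z n) where
  toFun x := ⟨tau n x, tau_A1 n x x.2⟩
  map_add' x y := by ext1; simp
  map_smul' r x := by ext1; simp

lemma tauA_comp (n : ℕ) : (tauA n) ∘ₗ (tauA n) = LinearMap.id := by
  ext1 x
  apply Subtype.ext
  simp [tauA, tau_tau]

lemma tauA_ESub (n i j : ℕ) : tauA n (ESub n i j) = ESub n j i := by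
  apply Subtype.ext
  simp only [tauA, ESub, Ee, LinearMap.coe_mk, AddHom.coe_mk, map_mul, map_sub, map_one, map_pow,
    tau_eps0, tau_eps1]
  ring

lemma wedge_map {M : Type*} [AddCommGroup M] (f : M →ₗ[ℤ] M) (a b : M) :
    exteriorPower.map 2 f (wedge a b) = wedge (f a) (f b) := by
  have h : ∀ a b : M, wedge a b = exteriorPower.ιMulti ℤ 2 ![a, b] := fun a b => rfl
  rw [h, h, exteriorPower.map_apply_ιMulti]
  congr 1
  ext i
  fin_cases i <;> rfl

lemma wedge_coe {M : Type*} [AddCommGroup M] (a b : M) :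
    ((wedge a b : Wedge2 M) : ExteriorAlgebra ℤ M) =
      ExteriorAlgebra.ι ℤ a * ExteriorAlgebra.ι ℤ b := by
  simp [wedge, ExteriorAlgebra.ιMulti_apply]

/-- the wedge as a bilinear map -/
def wedgeL (M : Type*) [AddCommGroup M] : M →ₗ[ℤ] M →ₗ[ℤ] Wedge2 M :=
  LinearMap.mk₂ ℤ (fun a b => wedge a b)
    (fun a b c => Subtype.ext (by simp [wedge_coe, add_mul]))
    (fun r a b => Subtype.ext (by simp only [wedge_coe, map_smul, smul_mul_assoc, mul_smul_comm, Submodule.coe_smul]))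
    (fun a b c => Subtype.ext (by simp [wedge_coe, mul_add]))
    (fun r a b => Subtype.ext (by simp only [wedge_coe, map_smul, smul_mul_assoc, mul_smul_comm, Submodule.coe_smul]))

lemma wedge_self' {M : Type*} [AddCommGroup M] (a : M) : (wedge a a : Wedge2 M) = 0 :=
  Subtype.ext (by simp [wedge_coe])

lemma Ee_red (n i j : ℕ) (hj : n ≤ j) : Ee n i j = Ee n i (j - n) := by
  have : eps1 n ^ j = eps1 n ^ (j - n) := by
    rw [← Nat.sub_add_cancel hj, pow_add, eps1_pow, mul_one, Nat.add_sub_cancel]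
  rw [Ee, Ee, this]

lemma diag_inner (n c i : ℕ) (hc : c ≤ n) (hi : 1 ≤ i) (hi' : i ≤ n - 1) :
    ∑ j ∈ Finset.Icc 1 (n - 1), ((if (j : ℤ) - i = c then Ee n i j else 0) +
      (if (j : ℤ) - i = c - n then Ee n i j else 0)) = Ee n i (i + c) := by
  by_cases h : i + c = n
  · rw [h, Ee_red n i n le_rfl, Nat.sub_self]
    rw [Finset.sum_eq_zero]
    · simp [Ee]
    · intro j hj
      rw [Finset.mem_Icc] at hj
      rw [if_neg (by omega), if_neg (by omega), add_zero]
  · by_cases h' : i + c < n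
    · rw [Finset.sum_eq_single (i + c)]
      · rw [if_pos (by omega), if_neg (by omega), add_zero]
      · intro j hj hne
        rw [Finset.mem_Icc] at hj
        rw [if_neg (by omega), if_neg (by omega), add_zero]
      · intro h; exact absurd (Finset.mem_Icc.2 (by omega)) h
    · rw [Ee_red n i (i + c) (by omega), Finset.sum_eq_single (i + c - n)]
      · rw [if_neg (by omega), if_pos (by omega), zero_add]
      · intro j hj hne
        rw [Finset.mem_Icc] at hj
        rw [if_neg (by omega), if_neg (by omega), add_zero]
      · intro h; exact absurd (Finset.mem_Icc.2 (by omega)) h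

lemma diag_total (n c : ℕ) (hn : 3 ≤ n) (hc : c ≤ n) (R : Finset (ℕ × ℕ))
    (hR : R = Finset.Icc 1 (n - 1) ×ˢ Finset.Icc 1 (n - 1)) :
    Pdiag R (fun p => Ee n p.1 p.2) c + Pdiag R (fun p => Ee n p.1 p.2) (c - n) =
      ∑ k ∈ Finset.range n, Ee n k (k + c) := by
  rw [Pdiag, Pdiag, ← Finset.sum_add_distrib, hR, Finset.sum_product]
  have h0 : Finset.range n = insert 0 (Finset.Icc 1 (n - 1)) := by
    ext x; simp; omega
  rw [h0, Finset.sum_insert (by simp)]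
  have : Ee n 0 (0 + c) = 0 := by simp [Ee]
  rw [this, zero_add]
  apply Finset.sum_congr rfl
  intro i hi
  rw [Finset.mem_Icc] at hi
  exact diag_inner n c i hc hi.1 hi.2

lemma sum_Ee (n c : ℕ) : ∑ k ∈ Finset.range n, Ee n k (k + c) -
    ∑ k ∈ Finset.range n, Ee n k (k + 0) = (eps1 n ^ c - 1) * Nel n := by
  have hg : ∑ k ∈ Finset.range n, eps1 n ^ (k + c) = ∑ k ∈ Finset.range n, eps1 n ^ k := by
    have h2 := mul_neg_geom_sum (eps1 n) n
    have h3 : ∀ c : ℕ, eps1 n ^ c * ∑ k ∈ Finset.range n, eps1 n ^ k =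
        ∑ k ∈ Finset.range n, eps1 n ^ k := by
      intro c
      rw [eps1_pow, sub_self, sub_mul, one_mul, sub_eq_zero] at h2
      induction c with
      | zero => simp
      | succ m ih => rw [pow_succ, mul_assoc, ← h2, ih]
    rw [← h3 c, Finset.mul_sum]
    exact Finset.sum_congr rfl fun k _ => by ring
  have e : ∀ c : ℕ, ∑ k ∈ Finset.range n, Ee n k (k + c) =
      ∑ k ∈ Finset.range n, (1 - eps0 n ^ k) - ∑ k ∈ Finset.range n, eps1 n ^ (k + c)
      + eps1 n ^ c * Nel n := by
    intro c
    rw [Nel, Finset.mul_sum, ← Finset.sum_sub_distrib, ← Finset.sum_add_distrib]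
    exact Finset.sum_congr rfl fun k _ => by rw [Ee]; ring
  rw [e c, e 0, hg]
  simp only [add_zero, pow_zero]
  ring

lemma Pdiag_coe (n : ℕ) (R : Finset (ℕ × ℕ)) (c : ℤ) :
    ((Pdiag R (fun p => ESub n p.1 p.2) c : A1Z n) : Lam n) =
      Pdiag R (fun p => Ee n p.1 p.2) c := by
  rw [Pdiag, Pdiag, AddSubmonoidClass.coe_finsetSum]
  apply Finset.sum_congr rfl
  intro p _
  split_ifs <;> rfl

lemma diag_mem (n c : ℕ) (hn : 3 ≤ n) (hc : c ≤ n) (R : Finset (ℕ × ℕ))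
    (hR : R = Finset.Icc 1 (n - 1) ×ˢ Finset.Icc 1 (n - 1)) :
    ((Pdiag R (fun p => ESub n p.1 p.2) c + Pdiag R (fun p => ESub n p.1 p.2) (c - n)
      - Pdiag R (fun p => ESub n p.1 p.2) 0 : A1Z n) : Lam n) ∈ Sgam n := by
  have hz : Pdiag R (fun p => Ee n p.1 p.2) (-(n : ℤ)) = 0 := by
    apply Finset.sum_eq_zero
    intro p hp
    simp only [hR, Finset.mem_product, Finset.mem_Icc] at hp
    rw [if_neg (by omega)]
  have h0 := diag_total n 0 hn (by omega) R hR
  rw [Nat.cast_zero, zero_sub, hz, add_zero] at h0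
  rw [Submodule.coe_sub, Submodule.coe_add, Pdiag_coe, Pdiag_coe, Pdiag_coe,
    diag_total n c hn hc R hR, h0, sum_Ee n c]
  exact sub_mem_S n c hc

/-- the ring automorphism `τ` of `Λ` interchanging `ε₀` and `ε₁` preserves
`A₁` and `S`, induces a `ℤ`-linear automorphism of `⋀²_ℤ A₁` with `a ∧ b ↦ τ(a) ∧ τ(b)`,
and `τ(Δ) − Δ` lies in `S ∧ A₁`. -/
theorem stmt_15 (n : ℕ) (hn : 3 ≤ n) :
    ∃ (τ : Lam n ≃+* Lam n) (τ' : ↥(A1Z n) ≃ₗ[ℤ] ↥(A1Z n))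
      (T : ↥(Wedge2 ↥(A1Z n)) ≃ₗ[ℤ] ↥(Wedge2 ↥(A1Z n))),
      τ (eps0 n) = eps1 n ∧ τ (eps1 n) = eps0 n ∧
      (∀ x ∈ A1 n, τ x ∈ A1 n) ∧
      (∀ x ∈ Sgam n, τ x ∈ Sgam n) ∧
      (∀ x : ↥(A1Z n), (τ' x : Lam n) = τ (x : Lam n)) ∧
      (∀ a b : ↥(A1Z n), T (wedge a b) = wedge (τ' a) (τ' b)) ∧
      T (Delta n) - Delta n ∈ SwedgeA1 n := by
  refine ⟨tau n, LinearEquiv.ofLinearMap (tauA n) (tauA n) (tauA_comp n) (tauA_comp n),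
    LinearEquiv.ofLinearMap (exteriorPower.map 2 (tauA n)) (exteriorPower.map 2 (tauA n))
      (by rw [← exteriorPower.map_comp, tauA_comp, exteriorPower.map_id])
      (by rw [← exteriorPower.map_comp, tauA_comp, exteriorPower.map_id]),
    tau_eps0 n, tau_eps1 n, tau_A1 n, tau_S n, fun x => rfl, fun a b => wedge_map _ a b, ?_⟩
  rw [LinearEquiv.coe_ofLinearMap, ← Submodule.Quotient.mk_eq_zero, ← Submodule.mkQ_apply, map_sub,
    sub_eq_zero, Delta]
  simp only [map_sum, map_smul, wedge_map, tauA_ESub]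
  let B : ↥(A1Z n) →ₗ[ℤ] ↥(A1Z n) →ₗ[ℤ] (↥(Wedge2 ↥(A1Z n)) ⧸ SwedgeA1 n) :=
    (wedgeL ↥(A1Z n)).compr₂ (SwedgeA1 n).mkQ
  have hBdef : ∀ a b, B a b = (SwedgeA1 n).mkQ (wedge a b) := fun a b => rfl
  refine abstract_main B ?_ (fun p => ESub n p.1 p.2) n hn _ rfl ?_
  · intro x
    rw [hBdef, wedge_self', map_zero]
  · intro c hc x
    rw [← sub_eq_zero, ← LinearMap.sub_apply, ← map_sub, hBdef, Submodule.mkQ_apply,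
      Submodule.Quotient.mk_eq_zero]
    exact Submodule.subset_span ⟨_, x, diag_mem n c hn hc _ rfl, rfl⟩
end
end
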